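/- Let K be a field with char K ≠ 2 and let H₁ ⊆ K* be a set such that every element of K* is ~₁-equivalent to exactly one element of H₁. Consider the list of algebras: S(0,1,1,0,−1,2); S(0,4,−4,−4,4,0); S(0,εt,t,0,δt,0) for t ∈ H₁ and ε, δ ∈ {1,−1}; and S(0,(1+t)²/4,(t²−1)/4,1,(1−t²)/4,t) for t ∈ K* with t ≠ 1 and t ≠ −1. Then: (1) every endo-commutative algebra S(0,q,a,b,c,d) over K with a ≠ 0 and c ≠ 0 is isomorphic to at least one algebra in this list; (2) any two algebras in the list with distinct parameter tuples (distinguishing the four families as well as distinct (t,ε,δ) or distinct t) are non-isomorphic. -/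

import Mathlib

/-- Multiplication of the 2-dimensional algebra `S(p,q,a,b,c,d)` on `K × K`,
with basis `e = (1,0)`, `f = (0,1)` and table
`e*e = f`, `f*f = p•e + q•f`, `e*f = a•e + b•f`, `f*e = c•e + d•f`. -/
def mulS {K : Type*} [Field K] (p q a b c d : K) (u v : K × K) : K × K :=
  (u.1 * v.2 * a + u.2 * v.1 * c + u.2 * v.2 * p,
   u.1 * v.1 + u.1 * v.2 * b + u.2 * v.1 * d + u.2 * v.2 * q)

/-- `S(p,q,a,b,c,d)` is endo-commutative: `(x*x)*(y*y) = (x*y)*(x*y)`. -/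
def EndoComm {K : Type*} [Field K] (p q a b c d : K) : Prop :=
  ∀ u v : K × K,
    mulS p q a b c d (mulS p q a b c d u u) (mulS p q a b c d v v) =
      mulS p q a b c d (mulS p q a b c d u v) (mulS p q a b c d u v)

/-- `S(p,q,a,b,c,d)` and `S(p',q',a',b',c',d')` are isomorphic: there is a bijective
`K`-linear map between them preserving multiplication. -/
def IsoS {K : Type*} [Field K] (p q a b c d p' q' a' b' c' d' : K) : Prop :=
  ∃ φ : (K × K) ≃ₗ[K] (K × K),
    ∀ u v : K × K,
      φ (mulS p q a b c d u v) = mulS p' q' a' b' c' d' (φ u) (φ v)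

/-- The relation `~₁` on `K*`: `t ~₁ t'` iff `t / t'` is the square of a nonzero
element. -/
def rel1 {K : Type*} [Field K] (t t' : K) : Prop := ∃ k : K, k ≠ 0 ∧ t / t' = k ^ 2

/-- The parameter tuples appearing in the classification list of
Theorem 7.1 (`char K ≠ 2`). -/
def InList1 {K : Type*} [Field K] (H₁ : Set K) (p q a b c d : K) : Prop :=
  (p, q, a, b, c, d) = ((0 : K), 1, 1, 0, -1, 2) ∨
  (p, q, a, b, c, d) = ((0 : K), 4, -4, -4, 4, 0) ∨
  (∃ t ∈ H₁, ∃ ε δ : K, (ε = 1 ∨ ε = -1) ∧ (δ = 1 ∨ δ = -1) ∧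
      (p, q, a, b, c, d) = ((0 : K), ε * t, t, 0, δ * t, 0)) ∨
  (∃ t : K, t ≠ 0 ∧ t ≠ 1 ∧ t ≠ -1 ∧
      (p, q, a, b, c, d) =
        ((0 : K), (1 + t) ^ 2 / 4, (t ^ 2 - 1) / 4, 1, (1 - t ^ 2) / 4, t))

/-!
Write `L u` and `R u` for left and right multiplication by `u`. An isomorphism `φ` conjugates them
into `L' (φ u)` and `R' (φ u)`, so it preserves the linear relations between the two trace forms
`tr L` and `tr R` and, up to a nonzero square, the discriminant of the quadratic form `det L`. For
the four families of the list the ratio `[tr L : tr R]` is `[0 : 1]`; `[1 : 0]`; `[δ + ε : 1 + ε]`,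
where both traces may vanish; `[1 : t]`. The discriminant is `0`; `0`; `4εδt³`; `0`. Hence these
invariants separate all members of the list.

Endo-commutativity forces `c = ±a`. If `c = a`, then `b = d = 0` and `q = ±a`, and rescaling the
basis brings the algebra to the third family. If `c = -a`, the discriminant is
`a²((b + d)² - 4q)`, the two invariants determine an endo-commutative algebra up to isomorphism,
and the relation `(q² - a²)((b + d)² - 4q) = 0` leaves only the values attained in the list.
-/

theorem four_ne_zero_of_two_ne_zero {R : Type*} [Semiring R] [NoZeroDivisors R]
    (h2 : (2 : R) ≠ 0) : (4 : R) ≠ 0 := by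
  simpa [show (4 : R) = 2 * 2 by norm_num] using h2

theorem exists_discrim_eq_of_comp {R : Type*} [CommRing R] {α β γ α' β' γ' : R}
    (φ : (R × R) ≃ₗ[R] (R × R))
    (h : ∀ u, α * u.1 ^ 2 + β * (u.1 * u.2) + γ * u.2 ^ 2 =
      α' * (φ u).1 ^ 2 + β' * ((φ u).1 * (φ u).2) + γ' * (φ u).2 ^ 2) :
    ∃ k : R, IsUnit k ∧ discrim α β γ = k ^ 2 * discrim α' β' γ' := by
  refine ⟨LinearMap.det (φ : R × R →ₗ[R] R × R), φ.isUnit_det', ?_⟩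
  rw [← LinearMap.det_toMatrix (Module.Basis.finTwoProd R), Matrix.det_fin_two]
  have hα := h (1, 0)
  have hγ := h (0, 1)
  have hβ := h ((1, 0) + (0, 1))
  rw [map_add] at hβ
  simp only [LinearMap.toMatrix_apply, Module.Basis.finTwoProd_zero, Module.Basis.finTwoProd_one,
    LinearEquiv.coe_coe, Module.Basis.coe_finTwoProd_repr, Matrix.cons_val_zero,
    Matrix.cons_val_one]
  generalize φ (1, 0) = v at hα hβ ⊢
  generalize φ (0, 1) = w at hγ hβ ⊢
  simp only [one_pow, mul_one, mul_zero, add_zero, ne_eq, OfNat.ofNat_ne_zero, not_false_eq_true,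
    zero_pow, Prod.mk_add_mk, zero_add, Prod.fst_add, Prod.snd_add] at hα hβ hγ
  replace hβ : β = 2 * α' * (v.1 * w.1) + β' * (v.1 * w.2 + w.1 * v.2) + 2 * γ' * (v.2 * w.2) := by
    linear_combination hβ - hα - hγ
  rw [discrim, discrim, hα, hγ, hβ]
  ring

section Multiplication

variable {K : Type*} [Field K]

/-- The multiplication of `S(p,q,a,b,c,d)` as a bilinear map: `mulHom p q a b c d u` is left
multiplication by `u`, and `(mulHom p q a b c d).flip u` is right multiplication by `u`. -/
def mulHom (p q a b c d : K) : K × K →ₗ[K] K × K →ₗ[K] K × K :=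
  LinearMap.mk₂ K (mulS p q a b c d)
    (fun _ _ _ => by ext <;> simp [mulS] <;> ring)
    (fun _ _ _ => by ext <;> simp [mulS] <;> ring)
    (fun _ _ _ => by ext <;> simp [mulS] <;> ring)
    (fun _ _ _ => by ext <;> simp [mulS] <;> ring)

@[simp]
theorem mulHom_apply (p q a b c d : K) (u v : K × K) :
    mulHom p q a b c d u v = mulS p q a b c d u v := rfl

theorem trace_mulHom (p q a b c d : K) (u : K × K) :
    LinearMap.trace K (K × K) (mulHom p q a b c d u) = b * u.1 + (c + q) * u.2 := by
  rw [LinearMap.trace_eq_matrix_trace K (Module.Basis.finTwoProd K), Matrix.trace_fin_two]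
  simp [LinearMap.toMatrix_apply, mulS]
  ring

theorem trace_mulHom_flip (p q a b c d : K) (u : K × K) :
    LinearMap.trace K (K × K) ((mulHom p q a b c d).flip u) = d * u.1 + (a + q) * u.2 := by
  rw [LinearMap.trace_eq_matrix_trace K (Module.Basis.finTwoProd K), Matrix.trace_fin_two]
  simp [LinearMap.toMatrix_apply, mulS]
  ring

theorem det_mulHom (p q a b c d : K) (u : K × K) :
    LinearMap.det (mulHom p q a b c d u) =
      -a * u.1 ^ 2 + (b * c - a * d - p) * (u.1 * u.2) + (c * q - d * p) * u.2 ^ 2 := by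
  rw [← LinearMap.det_toMatrix (Module.Basis.finTwoProd K), Matrix.det_fin_two]
  simp [LinearMap.toMatrix_apply, mulS]
  ring

theorem mulHom_map_eq_conj {p q a b c d p' q' a' b' c' d' : K} {φ : (K × K) ≃ₗ[K] (K × K)}
    (h : ∀ u v, φ (mulS p q a b c d u v) = mulS p' q' a' b' c' d' (φ u) (φ v)) (u : K × K) :
    mulHom p' q' a' b' c' d' (φ u) = φ.conj (mulHom p q a b c d u) := by
  refine LinearMap.ext fun v => ?_
  simp [LinearEquiv.conj_apply, h]

theorem mulHom_flip_map_eq_conj {p q a b c d p' q' a' b' c' d' : K}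
    {φ : (K × K) ≃ₗ[K] (K × K)}
    (h : ∀ u v, φ (mulS p q a b c d u v) = mulS p' q' a' b' c' d' (φ u) (φ v)) (u : K × K) :
    (mulHom p' q' a' b' c' d').flip (φ u) = φ.conj ((mulHom p q a b c d).flip u) := by
  refine LinearMap.ext fun v => ?_
  simp [LinearEquiv.conj_apply, h]

end Multiplication

section Invariants

variable {K : Type*} [Field K]

/-- The trace forms of left and right multiplication in `S(p,q,a,b,c,d)` satisfy
`r * tr L = s * tr R`; for nonzero `(r, s)` this says that their ratio is `[s : r]`. -/
def TraceRel (p q a b c d r s : K) : Prop :=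
  ∀ u : K × K, r * LinearMap.trace K (K × K) (mulHom p q a b c d u) =
    s * LinearMap.trace K (K × K) ((mulHom p q a b c d).flip u)

theorem traceRel_iff {p q a b c d r s : K} :
    TraceRel p q a b c d r s ↔ r * b = s * d ∧ r * (c + q) = s * (a + q) := by
  simp only [TraceRel, trace_mulHom, trace_mulHom_flip]
  refine ⟨fun h => ⟨by simpa using h (1, 0), by simpa using h (0, 1)⟩, fun h u => ?_⟩
  linear_combination u.1 * h.1 + u.2 * h.2

theorem IsoS.traceRel_iff {p q a b c d p' q' a' b' c' d' : K}
    (h : IsoS p q a b c d p' q' a' b' c' d') (r s : K) :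
    TraceRel p q a b c d r s ↔ TraceRel p' q' a' b' c' d' r s := by
  obtain ⟨φ, h⟩ := h
  refine φ.toEquiv.forall_congr fun u => ?_
  rw [LinearEquiv.coe_toEquiv, mulHom_map_eq_conj h, mulHom_flip_map_eq_conj h,
    LinearMap.trace_conj', LinearMap.trace_conj']

/-- The discriminant of the quadratic form `u ↦ det (L u)` on `S(p,q,a,b,c,d)`, where `L u` is left
multiplication by `u`; see `det_mulHom`. -/
def detDiscr (p q a b c d : K) : K :=
  discrim (-a) (b * c - a * d - p) (c * q - d * p)

theorem IsoS.exists_detDiscr_eq {p q a b c d p' q' a' b' c' d' : K}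
    (h : IsoS p q a b c d p' q' a' b' c' d') :
    ∃ k : K, k ≠ 0 ∧ detDiscr p q a b c d = k ^ 2 * detDiscr p' q' a' b' c' d' := by
  obtain ⟨φ, h⟩ := h
  suffices ∃ k : K, IsUnit k ∧ detDiscr p q a b c d = k ^ 2 * detDiscr p' q' a' b' c' d' by
    simpa only [isUnit_iff_ne_zero] using this
  refine exists_discrim_eq_of_comp φ fun u => ?_
  rw [← det_mulHom, ← det_mulHom, mulHom_map_eq_conj h]
  exact (LinearMap.det_conj _ φ).symm

end Invariants

section Isomorphisms

variable {K : Type*} [Field K]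

theorem isoS_rescale (p q a b c d : K) {k : K} (hk : k ≠ 0) :
    IsoS (k ^ 3 * p) (k ^ 2 * q) (k ^ 2 * a) (k * b) (k ^ 2 * c) (k * d) p q a b c d := by
  refine ⟨(LinearEquiv.smulOfNeZero K K k hk).prodCongr
    (LinearEquiv.smulOfNeZero K K (k ^ 2) (pow_ne_zero 2 hk)), fun u v => ?_⟩
  ext <;> simp [mulS] <;> ring

theorem isoS_of_skew {q a b d q' a' b' d' x y w : K} (hx : x ≠ 0) (hw : w ≠ 0)
    (hw_eq : w = x ^ 2 + (b' + d') * (x * y) + q' * y ^ 2) (hq : q = w * q') (ha : a = w * a')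
    (hb : b = x * b' + y * (q' - a')) (hd : d = x * d' + y * (q' + a')) :
    IsoS 0 q a b (-a) d 0 q' a' b' (-a') d' := by
  refine ⟨(LinearEquiv.smulOfNeZero K K x hx).skewProd (LinearEquiv.smulOfNeZero K K w hw)
    (y • LinearMap.id), fun u v => ?_⟩
  ext <;> simp only [mulS, LinearEquiv.skewProd_apply, LinearEquiv.smulOfNeZero_apply,
    smul_eq_mul, LinearMap.smul_apply, LinearMap.id_coe, id_eq]
  · rw [ha]
    ring
  · rw [hq, ha, hb, hd]
    linear_combination u.1 * v.1 * hw_eq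

/-- Shear the basis by the unique `y` which matches the trace forms; the discriminants then
guarantee that `e * e = f` is respected. -/
theorem isoS_of_traceRel_of_discrim {q a b d q' a' b' d' r s x : K} (h2 : (2 : K) ≠ 0)
    (hq : q ≠ 0) (hq' : q' ≠ 0) (hrs : r + s ≠ 0) (h : TraceRel 0 q a b (-a) d r s)
    (h' : TraceRel 0 q' a' b' (-a') d' r s) (hx : x ≠ 0)
    (hΔ : discrim 1 (b + d) q = x ^ 2 * discrim 1 (b' + d') q') :
    IsoS 0 q a b (-a) d 0 q' a' b' (-a') d' := by
  obtain ⟨hbd, hqa⟩ := traceRel_iff.1 h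
  obtain ⟨hbd', hqa'⟩ := traceRel_iff.1 h'
  obtain ⟨w, rfl⟩ : ∃ w, q = w * q' := ⟨q / q', (div_mul_cancel₀ q hq').symm⟩
  obtain ⟨y, hy⟩ : ∃ y, 2 * q' * y = b + d - x * (b' + d') :=
    ⟨(b + d - x * (b' + d')) / (2 * q'), mul_div_cancel₀ _ (mul_ne_zero h2 hq')⟩
  refine isoS_of_skew (y := y) hx (left_ne_zero_of_mul hq) ?_ rfl ?_ ?_ ?_
  · refine mul_left_cancel₀ (mul_ne_zero (mul_ne_zero h2 h2) hq') ?_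
    simp only [discrim] at hΔ
    linear_combination -hΔ - (2 * q' * y + x * (b' + d') + (b + d)) * hy
  · refine mul_left_cancel₀ hrs ?_
    linear_combination -hqa + w * hqa'
  · refine mul_left_cancel₀ hrs ?_
    linear_combination hbd - x * hbd' - y * hqa' - s * hy
  · refine mul_left_cancel₀ hrs ?_
    linear_combination -hbd + x * hbd' + y * hqa' - r * hy

end Isomorphisms

section EndoCommutative

variable {K : Type*} [Field K] {q a b c d : K}

theorem EndoComm.relations (h : EndoComm 0 q a b c d) :
    c ^ 2 = a ^ 2 ∧ a * b * (a + c) = 0 ∧ c * d * (a + c) = 0 ∧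
      a ^ 2 + a * b * (b + d) + b ^ 2 * q = q ^ 2 ∧ (c + q) * d = (a + q) * b := by
  have hef := h (1, 0) (0, 1)
  have hfe := h (0, 1) (1, 0)
  have hee := h (1, 0) (1, 1)
  simp only [mulS, Prod.mk.injEq] at hef hfe hee
  refine ⟨?_, ?_, ?_, ?_, ?_⟩
  · linear_combination hee.1 - hef.1
  · linear_combination -hef.1
  · linear_combination -hfe.1
  · linear_combination -hef.2
  · linear_combination hee.2 - hef.2

theorem EndoComm.eq_or_eq_neg (h : EndoComm 0 q a b c d) : c = a ∨ c = -a :=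
  sq_eq_sq_iff_eq_or_eq_neg.1 h.relations.1

theorem EndoComm.traceRel (h : EndoComm 0 q a b c d) :
    TraceRel 0 q a b c d (a + q) (c + q) := by
  obtain ⟨-, -, -, -, hbd⟩ := h.relations
  exact traceRel_iff.2 ⟨hbd.symm, mul_comm _ _⟩

theorem EndoComm.of_comm (h : EndoComm 0 q a b a d) (h2 : (2 : K) ≠ 0) (ha : a ≠ 0) :
    b = 0 ∧ d = 0 ∧ (q = a ∨ q = -a) := by
  obtain ⟨-, hb, hd, hq, -⟩ := h.relations
  have ha' : a + a ≠ 0 := by simpa [← two_mul] using ⟨h2, ha⟩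
  obtain rfl : b = 0 := by simpa [ha, ha'] using hb
  obtain rfl : d = 0 := by simpa [ha, ha'] using hd
  exact ⟨rfl, rfl, sq_eq_sq_iff_eq_or_eq_neg.1 (by linear_combination -hq)⟩

theorem EndoComm.ne_zero_of_anti (h : EndoComm 0 q a b (-a) d) (ha : a ≠ 0) : q ≠ 0 := by
  rintro rfl
  obtain ⟨-, -, -, hq, hbd⟩ := h.relations
  have ha2 : a ^ 2 = 0 := by linear_combination hq + b * hbd
  exact ha (pow_eq_zero_iff two_ne_zero |>.1 ha2)

/-- By `EndoComm.traceRel`, `2qb = (q - a)(b + d)`; substitute this in the fourth relation. -/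
theorem EndoComm.discrim_eq_zero_or (h : EndoComm 0 q a b (-a) d) :
    discrim 1 (b + d) q = 0 ∨ q = a ∨ q = -a := by
  obtain ⟨-, -, -, hq, hbd⟩ := h.relations
  have hb : 2 * q * b = (q - a) * (b + d) := by linear_combination -hbd
  have : (q ^ 2 - a ^ 2) * discrim 1 (b + d) q = 0 := by
    rw [discrim]
    linear_combination 4 * q * hq - (2 * a * (b + d) + 2 * q * b + (q - a) * (b + d)) * hb
  rw [← sq_eq_sq_iff_eq_or_eq_neg, ← sub_eq_zero (a := q ^ 2), or_comm]
  exact mul_eq_zero.1 this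

end EndoCommutative

section Existence

variable {K : Type*} [Field K] {H₁ : Set K} {q a b c d : K}

theorem rel1.exists_eq_sq_mul {t s : K} (h : rel1 t s) : ∃ k : K, k ≠ 0 ∧ t = k ^ 2 * s := by
  obtain ⟨k, hk, e⟩ := h
  have hs : s ≠ 0 := by
    rintro rfl
    exact pow_ne_zero 2 hk (by simpa using e.symm)
  exact ⟨k, hk, (div_eq_iff hs).1 e⟩

theorem exists_inList1_isoS_of_comm (h2 : (2 : K) ≠ 0)
    (hH₁ : ∀ t : K, t ≠ 0 → ∃ s ∈ H₁, rel1 t s) (ha : a ≠ 0) (h : EndoComm 0 q a b a d) :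
    ∃ p' q' a' b' c' d' : K, InList1 H₁ p' q' a' b' c' d' ∧
      IsoS 0 q a b a d p' q' a' b' c' d' := by
  obtain ⟨rfl, rfl, hq⟩ := h.of_comm h2 ha
  obtain ⟨ε, hε, rfl⟩ : ∃ ε : K, (ε = 1 ∨ ε = -1) ∧ q = ε * a := by
    simpa [or_and_right, exists_or] using hq
  obtain ⟨t, ht, hat⟩ := hH₁ a ha
  obtain ⟨k, hk, rfl⟩ := hat.exists_eq_sq_mul
  refine ⟨_, _, _, _, _, _, .inr (.inr (.inl ⟨t, ht, ε, 1, hε, .inl rfl, rfl⟩)), ?_⟩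
  convert isoS_rescale 0 (ε * t) t 0 (1 * t) 0 hk using 1 <;> ring

theorem EndoComm.isoS_of_discrim_eq (h : EndoComm 0 q a b (-a) d) (h2 : (2 : K) ≠ 0)
    (ha : a ≠ 0) {q' a' b' d' x : K} (hq' : q' ≠ 0)
    (h' : TraceRel 0 q' a' b' (-a') d' (a + q) (-a + q)) (hx : x ≠ 0)
    (hΔ : discrim 1 (b + d) q = x ^ 2 * discrim 1 (b' + d') q') :
    IsoS 0 q a b (-a) d 0 q' a' b' (-a') d' := by
  have hq := h.ne_zero_of_anti ha
  refine isoS_of_traceRel_of_discrim h2 hq hq' ?_ h.traceRel h' hx hΔ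
  rw [show (a + q) + (-a + q) = 2 * q by ring]
  exact mul_ne_zero h2 hq

theorem EndoComm.isoS_of_discrim_eq_zero (h : EndoComm 0 q a b (-a) d) (h2 : (2 : K) ≠ 0)
    (ha : a ≠ 0) (hΔ : discrim 1 (b + d) q = 0) {q' a' b' d' : K} (hq' : q' ≠ 0)
    (h' : TraceRel 0 q' a' b' (-a') d' (a + q) (-a + q)) (hΔ' : discrim 1 (b' + d') q' = 0) :
    IsoS 0 q a b (-a) d 0 q' a' b' (-a') d' :=
  h.isoS_of_discrim_eq h2 ha hq' h' one_ne_zero (by rw [hΔ, hΔ', mul_zero])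

theorem exists_inList1_isoS_of_discrim_eq_zero (h2 : (2 : K) ≠ 0) (ha : a ≠ 0)
    (h : EndoComm 0 q a b (-a) d) (hΔ : discrim 1 (b + d) q = 0) :
    ∃ p' q' a' b' c' d' : K, InList1 H₁ p' q' a' b' c' d' ∧
      IsoS 0 q a b (-a) d p' q' a' b' c' d' := by
  have h4 := four_ne_zero_of_two_ne_zero h2
  have hq := h.ne_zero_of_anti ha
  obtain rfl | hsub := eq_or_ne q a
  · refine ⟨_, _, _, _, _, _, .inl rfl,
      h.isoS_of_discrim_eq_zero h2 ha hΔ one_ne_zero ?_ ?_⟩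
    · simp [traceRel_iff]
    · norm_num [discrim]
  obtain rfl | hadd := eq_or_ne a (-q)
  · refine ⟨_, _, _, _, _, _, .inr (.inl (by rw [neg_neg])),
      h.isoS_of_discrim_eq_zero h2 ha hΔ h4 ?_ ?_⟩
    · simp [traceRel_iff]
    · norm_num [discrim]
  rw [← sub_ne_zero] at hsub
  rw [ne_eq, ← add_eq_zero_iff_eq_neg'] at hadd
  -- `t` is the trace ratio `tr R / tr L`.
  obtain ⟨t, ht⟩ : ∃ t, (q - a) * t = q + a := ⟨(q + a) / (q - a), mul_div_cancel₀ _ hsub⟩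
  have ht0 : t ≠ 0 := right_ne_zero_of_mul (ht.trans_ne hadd)
  have ht1 : t ≠ 1 := by
    rintro rfl
    exact mul_ne_zero h2 ha (by linear_combination -ht)
  have ht1' : t ≠ -1 := by
    rintro rfl
    exact mul_ne_zero h2 hq (by linear_combination -ht)
  have hadd_t : 1 + t ≠ 0 := fun e => ht1' (eq_neg_of_add_eq_zero_right e)
  refine ⟨_, _, _, _, _, _, .inr (.inr (.inr ⟨t, ht0, ht1, ht1', rfl⟩)), ?_⟩
  rw [← neg_sub (t ^ 2), neg_div]
  refine (h.isoS_of_discrim_eq_zero h2 ha hΔ (div_ne_zero (pow_ne_zero 2 hadd_t) h4) ?_ ?_)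
  · refine traceRel_iff.2 ⟨by linear_combination -ht, ?_⟩
    field_simp
    linear_combination -2 * (1 + t) * ht
  · rw [discrim]
    field_simp
    ring

theorem exists_inList1_isoS_of_discrim_ne_zero (h2 : (2 : K) ≠ 0)
    (hH₁ : ∀ t : K, t ≠ 0 → ∃ s ∈ H₁, rel1 t s) (ha : a ≠ 0)
    (h : EndoComm 0 q a b (-a) d) (hΔ : discrim 1 (b + d) q ≠ 0) :
    ∃ p' q' a' b' c' d' : K, InList1 H₁ p' q' a' b' c' d' ∧
      IsoS 0 q a b (-a) d p' q' a' b' c' d' := by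
  obtain ⟨ε, hε, rfl⟩ : ∃ ε : K, (ε = 1 ∨ ε = -1) ∧ q = ε * a := by
    simpa [or_and_right, exists_or] using h.discrim_eq_zero_or.resolve_left hΔ
  have hq := h.ne_zero_of_anti ha
  have hε0 : ε ≠ 0 := left_ne_zero_of_mul hq
  have hε2 : ε ^ 2 = 1 := sq_eq_one_iff.2 hε
  obtain ⟨t, ht, hΔt⟩ := hH₁ (-ε * discrim 1 (b + d) (ε * a))
    (mul_ne_zero (neg_ne_zero.2 hε0) hΔ)
  obtain ⟨k, hk, e⟩ := hΔt.exists_eq_sq_mul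
  have ht0 : t ≠ 0 := by
    rintro rfl
    simp_all
  refine ⟨_, _, _, _, _, _, .inr (.inr (.inl ⟨t, ht, ε, -1, hε, .inr rfl, rfl⟩)), ?_⟩
  rw [neg_one_mul]
  refine h.isoS_of_discrim_eq (x := k / 2) h2 ha (mul_ne_zero hε0 ht0) ?_
    (div_ne_zero hk h2) ?_
  · exact traceRel_iff.2 ⟨by ring, by ring⟩
  · simp only [discrim] at e ⊢
    field_simp
    linear_combination -4 * ε * e - 4 * ((b + d) ^ 2 - 4 * 1 * (ε * a)) * hε2

theorem exists_inList1_isoS (h2 : (2 : K) ≠ 0) (hH₁ : ∀ t : K, t ≠ 0 → ∃ s ∈ H₁, rel1 t s)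
    (ha : a ≠ 0) (h : EndoComm 0 q a b c d) :
    ∃ p' q' a' b' c' d' : K, InList1 H₁ p' q' a' b' c' d' ∧
      IsoS 0 q a b c d p' q' a' b' c' d' := by
  obtain rfl | rfl := h.eq_or_eq_neg
  · exact exists_inList1_isoS_of_comm h2 hH₁ ha h
  · by_cases hΔ : discrim 1 (b + d) q = 0
    · exact exists_inList1_isoS_of_discrim_eq_zero h2 ha h hΔ
    · exact exists_inList1_isoS_of_discrim_ne_zero h2 hH₁ ha h hΔ

end Existence

section Uniqueness

variable {K : Type*} [Field K] {H₁ : Set K}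

theorem detDiscr_third_family (ε δ t : K) :
    detDiscr 0 (ε * t) t 0 (δ * t) 0 = 4 * (ε * δ) * t ^ 3 := by
  rw [detDiscr, discrim]
  ring

theorem detDiscr_third_family_ne_zero {ε δ t : K} (h2 : (2 : K) ≠ 0) (hε : ε = 1 ∨ ε = -1)
    (hδ : δ = 1 ∨ δ = -1) (ht : t ≠ 0) : detDiscr 0 (ε * t) t 0 (δ * t) 0 ≠ 0 := by
  rw [detDiscr_third_family]
  have h4 := four_ne_zero_of_two_ne_zero h2
  rcases hε with rfl | rfl <;> rcases hδ with rfl | rfl <;> simp [h4, ht]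

theorem third_family_eq_of_isoS {ε δ t ε' δ' t' : K} (h2 : (2 : K) ≠ 0)
    (hε : ε = 1 ∨ ε = -1) (hδ : δ = 1 ∨ δ = -1) (ht : t ≠ 0) (hε' : ε' = 1 ∨ ε' = -1)
    (hδ' : δ' = 1 ∨ δ' = -1) (ht' : t' ≠ 0)
    (h : IsoS 0 (ε * t) t 0 (δ * t) 0 0 (ε' * t') t' 0 (δ' * t') 0) :
    ε = ε' ∧ δ = δ' ∧ rel1 t t' := by
  have h4 := four_ne_zero_of_two_ne_zero h2
  have trace_left : δ + ε = 0 ↔ δ' + ε' = 0 := by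
    simpa [traceRel_iff, ← add_mul, ht, ht'] using h.traceRel_iff 1 0
  have trace_right : 1 + ε = 0 ↔ 1 + ε' = 0 := by
    simpa [traceRel_iff, ← one_add_mul, ht, ht', eq_comm (a := (0 : K))] using h.traceRel_iff 0 1
  have hne : (1 : K) + 1 ≠ 0 := by rwa [one_add_one_eq_two]
  have hne' : (-1 : K) + -1 ≠ 0 := by rwa [← neg_add, neg_ne_zero]
  obtain rfl : ε = ε' := by
    rcases hε with rfl | rfl <;> rcases hε' with rfl | rfl <;> simp_all
  obtain rfl : δ = δ' := by
    rcases hε with rfl | rfl <;> rcases hδ with rfl | rfl <;> rcases hδ' with rfl | rfl <;>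
      simp_all
  obtain ⟨k, hk, e⟩ := h.exists_detDiscr_eq
  rw [detDiscr_third_family, detDiscr_third_family] at e
  have hεδ : 4 * (ε * δ) ≠ 0 := by
    rcases hε with rfl | rfl <;> rcases hδ with rfl | rfl <;> simpa
  have hcube : t ^ 3 = k ^ 2 * t' ^ 3 := mul_left_cancel₀ hεδ (by linear_combination e)
  refine ⟨rfl, rfl, k * t' / t, div_ne_zero (mul_ne_zero hk ht') ht, ?_⟩
  field_simp
  linear_combination hcube

theorem InList1.detDiscr_eq_zero_or {p q a b c d : K} (h2 : (2 : K) ≠ 0)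
    (h : InList1 H₁ p q a b c d) :
    detDiscr p q a b c d = 0 ∨ ∃ t ∈ H₁, ∃ ε δ : K, (ε = 1 ∨ ε = -1) ∧ (δ = 1 ∨ δ = -1) ∧
      (p, q, a, b, c, d) = (0, ε * t, t, 0, δ * t, 0) := by
  rcases h with h | h | h | ⟨t, -, -, -, h⟩
  · cases h
    left
    norm_num [detDiscr, discrim]
  · cases h
    left
    norm_num [detDiscr, discrim]
  · exact .inr h
  · cases h
    left
    have h4 := four_ne_zero_of_two_ne_zero h2
    rw [detDiscr, discrim]
    field_simp
    ring

theorem InList1.eq_of_traceRel_one_zero {p q a b c d : K} (h2 : (2 : K) ≠ 0)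
    (hH₁0 : ∀ s ∈ H₁, s ≠ 0) (h : InList1 H₁ p q a b c d) (hD : detDiscr p q a b c d = 0)
    (hT : TraceRel p q a b c d 1 0) : (p, q, a, b, c, d) = (0, 1, 1, 0, -1, 2) := by
  have h4 := four_ne_zero_of_two_ne_zero h2
  rcases h with h | h | ⟨t, ht, ε, δ, hε, hδ, h⟩ | ⟨t, -, -, -, h⟩
  · exact h
  · cases h
    simp [traceRel_iff, h4] at hT
  · cases h
    exact absurd hD (detDiscr_third_family_ne_zero h2 hε hδ (hH₁0 _ ht))
  · cases h
    simp [traceRel_iff] at hT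

theorem InList1.eq_of_traceRel_zero_one {p q a b c d : K} (h2 : (2 : K) ≠ 0)
    (hH₁0 : ∀ s ∈ H₁, s ≠ 0) (h : InList1 H₁ p q a b c d) (hD : detDiscr p q a b c d = 0)
    (hT : TraceRel p q a b c d 0 1) : (p, q, a, b, c, d) = (0, 4, -4, -4, 4, 0) := by
  rcases h with h | h | ⟨t, ht, ε, δ, hε, hδ, h⟩ | ⟨t, ht0, -, -, h⟩
  · cases h
    simp [traceRel_iff, h2.symm] at hT
  · exact h
  · cases h
    exact absurd hD (detDiscr_third_family_ne_zero h2 hε hδ (hH₁0 _ ht))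
  · cases h
    simp [traceRel_iff, ht0.symm] at hT

theorem InList1.eq_of_traceRel_one {p q a b c d t : K} (h2 : (2 : K) ≠ 0)
    (hH₁0 : ∀ s ∈ H₁, s ≠ 0) (h : InList1 H₁ p q a b c d) (hD : detDiscr p q a b c d = 0)
    (ht : t ≠ 0) (hT : TraceRel p q a b c d t 1) :
    (p, q, a, b, c, d) = (0, (1 + t) ^ 2 / 4, (t ^ 2 - 1) / 4, 1, (1 - t ^ 2) / 4, t) := by
  have h4 := four_ne_zero_of_two_ne_zero h2
  rcases h with h | h | ⟨s, hs, ε, δ, hε, hδ, h⟩ | ⟨s, -, -, -, h⟩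
  · cases h
    simp [traceRel_iff, h2.symm] at hT
  · cases h
    simp [traceRel_iff, ht, h4] at hT
  · cases h
    exact absurd hD (detDiscr_third_family_ne_zero h2 hε hδ (hH₁0 _ hs))
  · obtain rfl : t = s := by
      cases h
      simpa using (traceRel_iff.1 hT).1
    exact h

theorem InList1.eq_of_traceRel_iff {p q a b c d p' q' a' b' c' d' : K} (h2 : (2 : K) ≠ 0)
    (hH₁0 : ∀ s ∈ H₁, s ≠ 0) (h : InList1 H₁ p q a b c d) (h' : InList1 H₁ p' q' a' b' c' d')
    (hD : detDiscr p q a b c d = 0) (hD' : detDiscr p' q' a' b' c' d' = 0)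
    (hT : ∀ r s, TraceRel p q a b c d r s ↔ TraceRel p' q' a' b' c' d' r s) :
    (p, q, a, b, c, d) = (p', q', a', b', c', d') := by
  rcases h with h | h | ⟨t, ht, ε, δ, hε, hδ, h⟩ | ⟨t, ht0, -, -, h⟩
  · refine h.trans (h'.eq_of_traceRel_one_zero h2 hH₁0 hD' ((hT 1 0).1 ?_)).symm
    cases h
    simp [traceRel_iff]
  · refine h.trans (h'.eq_of_traceRel_zero_one h2 hH₁0 hD' ((hT 0 1).1 ?_)).symm
    cases h
    simp [traceRel_iff]
  · cases h
    exact absurd hD (detDiscr_third_family_ne_zero h2 hε hδ (hH₁0 _ ht))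
  · refine h.trans (h'.eq_of_traceRel_one h2 hH₁0 hD' ht0 ((hT t 1).1 ?_)).symm
    cases h
    have h4 := four_ne_zero_of_two_ne_zero h2
    refine traceRel_iff.2 ⟨by ring, ?_⟩
    field_simp
    ring

theorem InList1.eq_of_isoS {p q a b c d p' q' a' b' c' d' : K} (h2 : (2 : K) ≠ 0)
    (hH₁0 : ∀ s ∈ H₁, s ≠ 0) (hH₁ : ∀ s ∈ H₁, ∀ t ∈ H₁, rel1 s t → s = t)
    (h : InList1 H₁ p q a b c d) (h' : InList1 H₁ p' q' a' b' c' d')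
    (hiso : IsoS p q a b c d p' q' a' b' c' d') :
    (p, q, a, b, c, d) = (p', q', a', b', c', d') := by
  obtain ⟨k, hk, e⟩ := hiso.exists_detDiscr_eq
  have hD : detDiscr p' q' a' b' c' d' = 0 ↔ detDiscr p q a b c d = 0 := by simp [e, hk]
  by_cases hD0 : detDiscr p q a b c d = 0
  · exact h.eq_of_traceRel_iff h2 hH₁0 h' hD0 (hD.2 hD0) hiso.traceRel_iff
  obtain ⟨t, ht, ε, δ, hε, hδ, rfl, rfl⟩ := (h.detDiscr_eq_zero_or h2).resolve_left hD0
  obtain ⟨t', ht', ε', δ', hε', hδ', rfl, rfl⟩ :=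
    (h'.detDiscr_eq_zero_or h2).resolve_left (hD.not.2 hD0)
  obtain ⟨rfl, rfl, htt'⟩ :=
    third_family_eq_of_isoS h2 hε hδ (hH₁0 _ ht) hε' hδ' (hH₁0 _ ht') hiso
  rw [hH₁ _ ht _ ht' htt']

end Uniqueness

theorem classification_II1_char_ne_two {K : Type*} [Field K] (h2 : (2 : K) ≠ 0)
    (H₁ : Set K) (hH₁0 : ∀ s ∈ H₁, s ≠ 0)
    (hH₁ : ∀ t : K, t ≠ 0 → ∃! s, s ∈ H₁ ∧ rel1 t s) :
    (∀ q a b c d : K, a ≠ 0 → c ≠ 0 → EndoComm 0 q a b c d →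
        ∃ p' q' a' b' c' d' : K, InList1 H₁ p' q' a' b' c' d' ∧
          IsoS 0 q a b c d p' q' a' b' c' d') ∧
    (∀ p₁ q₁ a₁ b₁ c₁ d₁ p₂ q₂ a₂ b₂ c₂ d₂ : K,
        InList1 H₁ p₁ q₁ a₁ b₁ c₁ d₁ → InList1 H₁ p₂ q₂ a₂ b₂ c₂ d₂ →
        (p₁, q₁, a₁, b₁, c₁, d₁) ≠ (p₂, q₂, a₂, b₂, c₂, d₂) →
        ¬ IsoS p₁ q₁ a₁ b₁ c₁ d₁ p₂ q₂ a₂ b₂ c₂ d₂) := by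
  refine ⟨fun q a b c d ha _ h => ?_, fun p₁ q₁ a₁ b₁ c₁ d₁ p₂ q₂ a₂ b₂ c₂ d₂ h₁ h₂ hne h => ?_⟩
  · exact exists_inList1_isoS h2 (fun t ht => (hH₁ t ht).exists) ha h
  · refine hne (h₁.eq_of_isoS h2 hH₁0 (fun s hs t ht hst => ?_) h₂ h)
    have hss : rel1 s s := ⟨1, one_ne_zero, by rw [div_self (hH₁0 s hs), one_pow]⟩
    exact (hH₁ s (hH₁0 s hs)).unique ⟨hs, hss⟩ ⟨ht, hst⟩
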